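/- Let d ≥ 3 be odd, n = (d²+1)/2, and in R = 𝔽₂[x]/(xⁿ−1) set a = 1+x and b = (1+x)·P_d(x). Then for all j, u, v ∈ R: if (u + j·(1+x), v) ∈ C₁(a,b) \ C₂(a,b), then wt(j) + wt(u) + wt(v) ≥ d. (Hence under the RL syndrome-extraction pattern, whose check-qubit faults propagate to data errors of the form (j·(1+x), 0), the effective distance of the [[d²+1, 2, d]] GB code equals its minimum distance d.) -/

import Mathlib

open Polynomial

noncomputable section

/-- `R2 n` is the ring `𝔽₂[x]/(xⁿ − 1)`. -/
abbrev R2 (n : ℕ) : Type := AdjoinRoot (X ^ n - 1 : (ZMod 2)[X])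

/-- The image of `x` in `𝔽₂[x]/(xⁿ − 1)`. -/
def xR (n : ℕ) : R2 n := AdjoinRoot.root _

/-- The quotient map `𝔽₂[x] → 𝔽₂[x]/(xⁿ − 1)`. -/
def mkR (n : ℕ) : (ZMod 2)[X] →+* R2 n := AdjoinRoot.mk _

lemma xR_pow_n (n : ℕ) : xR n ^ n = 1 := by
  have h : (AdjoinRoot.mk (X ^ n - 1 : (ZMod 2)[X])) (X ^ n - 1) = 0 := AdjoinRoot.mk_self
  rw [map_sub, map_pow, AdjoinRoot.mk_X, map_one, sub_eq_zero] at h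
  exact h

/-- The unique representative of degree `< n` of an element of `𝔽₂[x]/(xⁿ − 1)` (junk if `n = 0`). -/
def repP {n : ℕ} (u : R2 n) : (ZMod 2)[X] :=
  if h : n = 0 then 0
  else AdjoinRoot.modByMonicHom (by simpa using monic_X_pow_sub_C (1 : ZMod 2) h) u

/-- The Hamming weight of an element of `𝔽₂[x]/(xⁿ − 1)`: the number of nonzero coefficients
of its degree-`< n` representative. -/
def wt {n : ℕ} (u : R2 n) : ℕ := (repP u).support.card

/-- Coefficient of the degree-`< n` representative, indexed by `ℤ/n`. -/
def coeffZ {n : ℕ} (u : R2 n) (i : ZMod n) : ZMod 2 := (repP u).coeff i.val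

/-- The X-stabilizer space `C₂(a,b) = {(r·a, r·b) : r ∈ R}` of the GB code of `(a,b)`. -/
def C2set (n : ℕ) (a b : R2 n) : Set (R2 n × R2 n) := {p | ∃ r : R2 n, p = (r * a, r * b)}

/-- The space `C₁(a,b) = {(u,v) : u·b + v·a = 0}` of the GB code of `(a,b)`. -/
def C1set (n : ℕ) (a b : R2 n) : Set (R2 n × R2 n) := {p | p.1 * b + p.2 * a = 0}

/-- The (X-side) minimum distance of the GB code of `(a,b)`. -/
def dGB (n : ℕ) (a b : R2 n) : ℕ :=
  sInf {k | ∃ p ∈ C1set n a b \ C2set n a b, wt p.1 + wt p.2 = k}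

/-- `P_m(x) = 1 + x + ⋯ + x^{m−1}` as a polynomial over `𝔽₂`. -/
def PmP (m : ℕ) : (ZMod 2)[X] := ∑ i ∈ Finset.range m, X ^ i

/-- `P_m(x) = 1 + x + ⋯ + x^{m−1}` as an element of `𝔽₂[x]/(xⁿ − 1)`. -/
def PmR (n m : ℕ) : R2 n := ∑ i ∈ Finset.range m, xR n ^ i

/-- The ring endomorphism of `𝔽₂[x]/(xⁿ − 1)` induced by `x ↦ x^d`. -/
def substHom (n d : ℕ) : R2 n →+* R2 n :=
  AdjoinRoot.lift (algebraMap (ZMod 2) (R2 n)) (xR n ^ d) (by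
    simp only [eval₂_sub, eval₂_X_pow, eval₂_one]
    rw [← pow_mul, mul_comm d n, pow_mul, xR_pow_n, one_pow, sub_self])

/-- The Euclidean inner product on `𝔽₂²ⁿ`, in terms of pairs `(u₁, u₂)` of elements of
`𝔽₂[x]/(xⁿ − 1)` (representing the concatenated binary vector `(u₁ | u₂)`). -/
def eucInner (n : ℕ) (p q : R2 n × R2 n) : ZMod 2 :=
  ∑ i ∈ Finset.range n,
    ((repP p.1).coeff i * (repP q.1).coeff i + (repP p.2).coeff i * (repP q.2).coeff i)

/-- The symplectic inner product of `u₁ + w·u₂` and `v₁ + w·v₂`, i.e.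
`Σᵢ (u₁ᵢ·v₂ᵢ + u₂ᵢ·v₁ᵢ)`, in terms of the pairs `(u₁,u₂)`, `(v₁,v₂)`. -/
def sympInner (n : ℕ) (p q : R2 n × R2 n) : ZMod 2 :=
  ∑ i ∈ Finset.range n,
    ((repP p.1).coeff i * (repP q.2).coeff i + (repP p.2).coeff i * (repP q.1).coeff i)

/-- Euclidean dual of a set of (pairs representing) binary vectors of length `2n`. -/
def eucDual (n : ℕ) (S : Set (R2 n × R2 n)) : Set (R2 n × R2 n) :=
  {p | ∀ q ∈ S, eucInner n q p = 0}

/-- Symplectic dual of a set of (pairs representing) vectors of `𝔽₄ⁿ`. -/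
def sympDual (n : ℕ) (S : Set (R2 n × R2 n)) : Set (R2 n × R2 n) :=
  {p | ∀ q ∈ S, sympInner n q p = 0}

/-- Number of nonzero `𝔽₄`-coordinates of `u₁ + w·u₂`, in terms of the pair `(u₁,u₂)`. -/
def wt4 (n : ℕ) (p : R2 n × R2 n) : ℕ := ((repP p.1).support ∪ (repP p.2).support).card

/-- The `2n` binary coordinates of a pair `(u₁,u₂)`. -/
def coords {n : ℕ} (p : R2 n × R2 n) : (Fin n ⊕ Fin n) → ZMod 2 :=
  Sum.elim (fun i => (repP p.1).coeff i) (fun i => (repP p.2).coeff i)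

/-- Vertex set of the Tanner graph: check vertices `x_t` (left) and data vertices
`q_s`, `q'_s` (right). -/
def TV (n : ℕ) : Type := (ZMod n) ⊕ ((ZMod n) ⊕ (ZMod n))

/-- `trel a b v w` holds iff `v` is a check vertex `x_t`, `w` is a data vertex, and they are
connected: `x_t ~ q_s` iff `a_{s−t} = 1`, and `x_t ~ q'_s` iff `b_{s−t} = 1`. -/
def trel {n : ℕ} (a b : R2 n) (v w : TV n) : Prop :=
  ∃ t s : ZMod n, v = Sum.inl t ∧
    ((w = Sum.inr (Sum.inl s) ∧ coeffZ a (s - t) = 1) ∨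
     (w = Sum.inr (Sum.inr s) ∧ coeffZ b (s - t) = 1))

/-- The Tanner graph `T(a,b)` of the GB code of `(a,b)`. -/
def tanner (n : ℕ) (a b : R2 n) : SimpleGraph (TV n) where
  Adj v w := trel a b v w ∨ trel a b w v
  symm := ⟨fun v w h => Or.symm h⟩
  loopless := by
    constructor
    rintro v (⟨t, s, hv, hw⟩ | ⟨t, s, hv, hw⟩) <;>
      rcases hw with ⟨hw, -⟩ | ⟨hw, -⟩ <;> (subst hv; simp at hw)

end

noncomputable section

section WeightBounds

variable {n : ℕ}

lemma monic_X_pow_sub_one (hn : n ≠ 0) : (X ^ n - 1 : (ZMod 2)[X]).Monic := by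
  simpa using monic_X_pow_sub_C (1 : ZMod 2) hn

lemma repP_mk (hn : n ≠ 0) (p : (ZMod 2)[X]) : repP (mkR n p) = p %ₘ (X ^ n - 1) := by
  simp only [repP, hn, dif_neg, not_false_eq_true]
  exact AdjoinRoot.modByMonicHom_mk (monic_X_pow_sub_one hn) p

lemma mk_repP (hn : n ≠ 0) (u : R2 n) : mkR n (repP u) = u := by
  simp only [repP, hn, dif_neg, not_false_eq_true]
  exact AdjoinRoot.mk_leftInverse (monic_X_pow_sub_one hn) u

lemma mkR_X : mkR n X = xR n := AdjoinRoot.mk_X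

lemma mkR_surjective : Function.Surjective (mkR n) := AdjoinRoot.mk_surjective

lemma wt_zero : wt (0 : R2 n) = 0 := by
  unfold wt repP
  split_ifs <;> simp

lemma wt_add_le (u v : R2 n) : wt (u + v) ≤ wt u + wt v := by
  have h : repP (u + v) = repP u + repP v := by
    unfold repP
    split_ifs <;> simp
  unfold wt
  rw [h]
  exact (Finset.card_le_card support_add).trans (Finset.card_union_le _ _)

lemma wt_sum_le {ι : Type*} (s : Finset ι) (f : ι → R2 n) :
    wt (∑ i ∈ s, f i) ≤ ∑ i ∈ s, wt (f i) :=
  Finset.le_sum_of_subadditive wt wt_zero.le wt_add_le s f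

lemma degree_X_pow_sub_one (hn : n ≠ 0) : (X ^ n - 1 : (ZMod 2)[X]).degree = n := by
  simpa using degree_X_pow_sub_C (Nat.pos_of_ne_zero hn) (1 : ZMod 2)

lemma repP_mk_of_degree_lt (hn : n ≠ 0) {p : (ZMod 2)[X]} (hp : p.degree < n) :
    repP (mkR n p) = p := by
  rw [repP_mk hn, modByMonic_eq_self_iff (monic_X_pow_sub_one hn), degree_X_pow_sub_one hn]
  exact hp

lemma wt_xR_pow_le (hn : n ≠ 0) (k : ℕ) : wt (xR n ^ k) ≤ 1 := by
  have h : xR n ^ k = mkR n (X ^ (k % n)) := by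
    rw [map_pow, mkR_X]
    conv_lhs => rw [← Nat.div_add_mod k n, pow_add, pow_mul, xR_pow_n, one_pow, one_mul]
  have hlt : (X ^ (k % n) : (ZMod 2)[X]).degree < n := by
    rw [degree_X_pow]
    exact_mod_cast Nat.mod_lt k (Nat.pos_of_ne_zero hn)
  rw [wt, h, repP_mk_of_degree_lt hn hlt]
  exact card_support_le_one_iff_monomial.2 ⟨_, 1, (X_pow_eq_monomial _)⟩

lemma wt_mkR_le (hn : n ≠ 0) (p : (ZMod 2)[X]) : wt (mkR n p) ≤ p.support.card := by
  have hp : mkR n p = ∑ i ∈ p.support, xR n ^ i := by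
    conv_lhs => rw [p.as_sum_support_C_mul_X_pow, map_sum]
    refine Finset.sum_congr rfl fun i hi => ?_
    have hc : p.coeff i = 1 := by
      have := mem_support_iff.1 hi
      generalize p.coeff i = c at this
      revert this c
      decide
    rw [hc, map_mul, map_pow, mkR_X, map_one, map_one, one_mul]
  rw [hp]
  refine (wt_sum_le _ _).trans ?_
  simpa using Finset.sum_le_sum fun i (_ : i ∈ p.support) => wt_xR_pow_le hn i

lemma wt_xR_pow_mul_le (hn : n ≠ 0) (k : ℕ) (u : R2 n) : wt (xR n ^ k * u) ≤ wt u := by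
  have h : xR n ^ k * u = mkR n (repP u * X ^ k) := by
    rw [map_mul, map_pow, mkR_X, mk_repP hn, mul_comm]
  rw [h]
  refine (wt_mkR_le hn _).trans ?_
  have hs : (repP u * X ^ k).support ⊆ (repP u).support.image (· + k) := by
    intro i hi
    rw [mem_support_iff, coeff_mul_X_pow'] at hi
    split_ifs at hi with hki
    · exact Finset.mem_image.2 ⟨i - k, mem_support_iff.2 hi, Nat.sub_add_cancel hki⟩
    · exact absurd rfl hi
  exact (Finset.card_le_card hs).trans Finset.card_image_le

lemma wt_sum_xR_pow_mul_le (hn : n ≠ 0) (m : ℕ) (g : ℕ → ℕ) (u : R2 n) :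
    wt ((∑ i ∈ Finset.range m, xR n ^ g i) * u) ≤ m * wt u := by
  rw [Finset.sum_mul]
  refine (wt_sum_le _ _).trans ?_
  simpa using Finset.sum_le_sum
    fun i (_ : i ∈ Finset.range m) => wt_xR_pow_mul_le hn (g i) u

lemma wt_PmR_self (hn : n ≠ 0) : wt (PmR n n) = n := by
  have h : PmR n n = mkR n (PmP n) := by simp [PmR, PmP, mkR_X]
  have hc (i : ℕ) : (PmP n).coeff i = if i < n then 1 else 0 := by
    simp [PmP, coeff_X_pow]
  have hdeg : (PmP n).degree < n := by
    rw [degree_lt_iff_coeff_zero]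
    intro i hi
    simp [hc, Nat.not_lt.2 hi]
  have hs : (PmP n).support = Finset.range n := by
    ext i
    simp [mem_support_iff, hc]
  rw [wt, h, repP_mk_of_degree_lt hn hdeg, hs, Finset.card_range]

end WeightBounds

section CyclicAlgebra

variable {n : ℕ}

lemma add_self_R2 (u : R2 n) : u + u = 0 := by
  have h : (2 : R2 n) = 0 := by
    have := congrArg (mkR n) (show (2 : (ZMod 2)[X]) = 0 from CharTwo.two_eq_zero)
    rwa [map_ofNat, map_zero] at this
  rw [← two_mul, h, zero_mul]

lemma one_add_xR_mul_PmR (m : ℕ) : (1 + xR n) * PmR n m = 1 + xR n ^ m := by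
  have h := mul_geom_sum (xR n) m
  unfold PmR
  linear_combination h + add_self_R2 (∑ i ∈ Finset.range m, xR n ^ i) - add_self_R2 (1 : R2 n)

lemma one_add_xR_mul_PmR_self : (1 + xR n) * PmR n n = 0 := by
  rw [one_add_xR_mul_PmR, xR_pow_n, add_self_R2]

lemma PmR_add (k m : ℕ) : PmR n (k + m) = PmR n k + xR n ^ k * PmR n m := by
  simp only [PmR, Finset.sum_range_add, Finset.mul_sum, pow_add]

lemma PmR_mul (d m : ℕ) :
    PmR n (d * m) = PmR n d * ∑ k ∈ Finset.range m, xR n ^ (d * k) := by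
  induction m with
  | zero => simp [PmR]
  | succ m ih =>
    rw [Nat.mul_succ, PmR_add, ih, Finset.sum_range_succ]
    ring

lemma exists_eq_one_add_xR_mul_add (u : R2 n) :
    ∃ r : R2 n, u = (1 + xR n) * r ∨ u = (1 + xR n) * r + 1 := by
  obtain ⟨p, rfl⟩ := mkR_surjective u
  have hp : p = (X - C 1) * (p /ₘ (X - C 1)) + C (p.eval 1) := by
    rw [← modByMonic_X_sub_C_eq_C_eval, add_comm]
    exact (modByMonic_add_div p (X - C 1)).symm
  have hx : mkR n (X - C 1) = 1 + xR n := by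
    rw [map_sub, mkR_X, map_one, map_one]
    linear_combination -add_self_R2 (1 : R2 n)
  have hc : ∀ c : ZMod 2, c = 0 ∨ c = 1 := by decide
  refine ⟨mkR n (p /ₘ (X - C 1)), ?_⟩
  rw [← hx, ← map_mul]
  rcases hc (p.eval 1) with h | h
  · left
    conv_lhs => rw [hp, h]
    simp
  · right
    conv_lhs => rw [hp, h]
    simp

lemma eq_zero_or_eq_PmR_of_mul_eq_zero {w : R2 n} (hw : (1 + xR n) * w = 0) :
    w = 0 ∨ w = PmR n n := by
  obtain ⟨p, rfl⟩ := mkR_surjective w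
  have hx : mkR n (X - 1) = 1 + xR n := by
    rw [map_sub, mkR_X, map_one]
    linear_combination -add_self_R2 (1 : R2 n)
  rw [← hx, ← map_mul] at hw
  have hdvd : (X ^ n - 1 : (ZMod 2)[X]) ∣ (X - 1) * p := AdjoinRoot.mk_eq_zero.1 hw
  rw [← mul_geom_sum] at hdvd
  have hne : (X - 1 : (ZMod 2)[X]) ≠ 0 := by simpa using X_sub_C_ne_zero (1 : ZMod 2)
  obtain ⟨q, rfl⟩ := (mul_dvd_mul_iff_left hne).1 hdvd
  have hP : mkR n (∑ i ∈ Finset.range n, X ^ i) = PmR n n := by simp [PmR, mkR_X]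
  rw [map_mul, hP]
  obtain ⟨r, h | h⟩ := exists_eq_one_add_xR_mul_add (mkR n q)
  · left
    rw [h]
    linear_combination r * one_add_xR_mul_PmR_self (n := n)
  · right
    rw [h]
    linear_combination r * one_add_xR_mul_PmR_self (n := n)

end CyclicAlgebra

/-- A relation expressing the all-ones word through `m` shifts of `v` and a shifted window of
length `l` of `u + j·(1+x)` bounds the weights: the hook term telescopes to two shifts of `j`. -/
lemma le_of_window_relation {n : ℕ} (hn : n ≠ 0) (j u v : R2 n) (m l s : ℕ) (g : ℕ → ℕ)
    (h : (∑ k ∈ Finset.range m, xR n ^ g k) * v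
      + xR n ^ s * PmR n l * (u + j * (1 + xR n)) = PmR n n) :
    n ≤ m * wt v + l * wt u + 2 * wt j := by
  have hsplit : PmR n n = (∑ k ∈ Finset.range m, xR n ^ g k) * v
      + xR n ^ s * (PmR n l * u) + (xR n ^ s * j + xR n ^ (s + l) * j) := by
    rw [← h]
    linear_combination xR n ^ s * j * one_add_xR_mul_PmR (n := n) l
  have hv := wt_sum_xR_pow_mul_le hn m g v
  have hu := (wt_xR_pow_mul_le hn s (PmR n l * u)).trans
    (wt_sum_xR_pow_mul_le hn l (fun i => i) u)
  have hj := wt_xR_pow_mul_le hn s j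
  have hj' := wt_xR_pow_mul_le hn (s + l) j
  have hA := wt_add_le ((∑ k ∈ Finset.range m, xR n ^ g k) * v
      + xR n ^ s * (PmR n l * u)) (xR n ^ s * j + xR n ^ (s + l) * j)
  have hB := wt_add_le ((∑ k ∈ Finset.range m, xR n ^ g k) * v) (xR n ^ s * (PmR n l * u))
  have hC := wt_add_le (xR n ^ s * j) (xR n ^ (s + l) * j)
  have hJ := wt_PmR_self hn
  rw [hsplit] at hJ
  omega

/-- For the `[[d²+1, 2, d]]` GB code (`d ≥ 3` odd, `2n = d²+1`,
`a = 1+x`, `b = (1+x)·P_d(x)`): for all `j, u, v ∈ R`, if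
`(u + j·(1+x), v) ∈ C₁(a,b) \ C₂(a,b)` then `wt(j) + wt(u) + wt(v) ≥ d`.
(Hence under the RL syndrome-extraction pattern the effective distance equals `d`.) -/
theorem stmt_11 (d n : ℕ) (hd : Odd d) (hd3 : 3 ≤ d) (hn : 2 * n = d ^ 2 + 1)
    (a b : R2 n) (ha : a = 1 + xR n) (hb : b = (1 + xR n) * PmR n d) :
    ∀ j u v : R2 n, (u + j * (1 + xR n), v) ∈ C1set n a b \ C2set n a b →
      d ≤ wt j + wt u + wt v := by
  rintro j u v ⟨hC1, hC2⟩
  obtain ⟨f, rfl⟩ := hd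
  have hf : 1 ≤ f := by omega
  have hnf : n = 2 * f ^ 2 + 2 * f + 1 := by nlinarith
  have hn0 : n ≠ 0 := by omega
  subst ha hb
  set U := u + j * (1 + xR n) with hU
  have hC1' : U * ((1 + xR n) * PmR n (2 * f + 1)) + v * (1 + xR n) = 0 := hC1
  obtain ⟨w, hw⟩ : ∃ w, w = v + U * PmR n (2 * f + 1) := ⟨_, rfl⟩
  have hker : (1 + xR n) * w = 0 := by
    rw [hw]
    linear_combination hC1'
  have hJx := one_add_xR_mul_PmR_self (n := n)
  have hrel (m l s : ℕ)
      (h : (∑ k ∈ Finset.range m, xR n ^ ((2 * f + 1) * k)) * w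
        + (PmR n ((2 * f + 1) * m) + xR n ^ s * PmR n l) * U = PmR n n) :
      n ≤ m * wt v + l * wt u + 2 * wt j := by
    refine le_of_window_relation hn0 j u v m l s (fun k => (2 * f + 1) * k) ?_
    rw [← hU, ← h, hw, PmR_mul]
    linear_combination -(add_self_R2 ((∑ k ∈ Finset.range m, xR n ^ ((2 * f + 1) * k)) *
      U * PmR n (2 * f + 1)))
  have hB : PmR n ((2 * f + 1) * f) + xR n ^ ((2 * f + 1) * f) * PmR n (f + 1) = PmR n n := by
    rw [← PmR_add]
    congr 1
    rw [hnf]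
    ring
  have hC : PmR n ((2 * f + 1) * (f + 1)) + xR n ^ 0 * PmR n f = PmR n n := by
    have h : (2 * f + 1) * (f + 1) = n + f := by
      rw [hnf]
      ring
    rw [h, PmR_add, xR_pow_n]
    linear_combination add_self_R2 (PmR n f)
  have hA : PmR n ((2 * f + 1) * 1) + xR n ^ 0 * PmR n (2 * f + 1) = 0 := by
    rw [mul_one]
    linear_combination add_self_R2 (PmR n (2 * f + 1))
  have hA' : PmR n ((2 * f + 1) * (2 * f + 1)) + xR n ^ (n - 1) * PmR n 1 = 0 := by
    have h : (2 * f + 1) * (2 * f + 1) = n + (n - 1) := by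
      rw [hnf, Nat.add_sub_cancel]
      ring
    have h' := PmR_add (n := n) (n - 1) 1
    rw [Nat.sub_add_cancel (by omega)] at h'
    rw [h, PmR_add, xR_pow_n]
    linear_combination add_self_R2 (PmR n n) - h'
  have hxJ (k : ℕ) : xR n ^ k * PmR n n = PmR n n := by
    linear_combination PmR n k * hJx - add_self_R2 (PmR n n)
      - PmR n n * one_add_xR_mul_PmR (n := n) k
  have hQ (m : ℕ) : (∑ k ∈ Finset.range m, xR n ^ ((2 * f + 1) * k)) * PmR n n
      = m * PmR n n := by
    rw [Finset.sum_mul, Finset.sum_congr rfl fun k _ => hxJ _]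
    simp
  have hcast : (f * PmR n n = 0 ∧ ((f + 1 : ℕ) : R2 n) * PmR n n = PmR n n) ∨
      (f * PmR n n = PmR n n ∧ ((f + 1 : ℕ) : R2 n) * PmR n n = 0) := by
    rcases Nat.even_or_odd' f with ⟨g, hg | hg⟩
    · left
      rw [hg]
      push_cast
      exact ⟨by linear_combination g * add_self_R2 (PmR n n),
        by linear_combination g * add_self_R2 (PmR n n)⟩
    · right
      rw [hg]
      push_cast
      exact ⟨by linear_combination g * add_self_R2 (PmR n n),
        by linear_combination (g + 1) * add_self_R2 (PmR n n)⟩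
  have hboth : n ≤ f * wt v + (f + 1) * wt u + 2 * wt j →
      n ≤ (f + 1) * wt v + f * wt u + 2 * wt j → 2 * f + 1 ≤ wt j + wt u + wt v := by
    intro h₁ h₂
    by_contra! hlt
    have hT : wt j + wt u + wt v ≤ 2 * f := by omega
    have := Nat.mul_le_mul_left (2 * f + 2) hT
    have := Nat.mul_le_mul_right (wt j) (show 4 ≤ 2 * f + 2 by omega)
    nlinarith
  obtain ⟨r, hr⟩ := exists_eq_one_add_xR_mul_add U
  rcases eq_zero_or_eq_PmR_of_mul_eq_zero hker with h0 | h1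
  · have hr1 : U = (1 + xR n) * r + 1 := by
      refine hr.resolve_left fun h => hC2 ⟨r, ?_⟩
      rw [h0] at hw
      refine Prod.ext ?_ ?_
      · simpa [mul_comm] using h
      · change v = r * ((1 + xR n) * PmR n (2 * f + 1))
        linear_combination -hw - PmR n (2 * f + 1) * h
          - PmR n (2 * f + 1) * add_self_R2 ((1 + xR n) * r)
    have hJU : PmR n n * U = PmR n n := by
      rw [hr1]
      linear_combination r * hJx
    exact hboth (hrel _ _ _ (by rw [hB, h0, hJU, mul_zero, zero_add]))
      (hrel _ _ _ (by rw [hC, h0, hJU, mul_zero, zero_add]))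
  · have h₁ := hrel 1 (2 * f + 1) 0 (by rw [hA, h1, hQ]; simp)
    have h₂ := hrel (2 * f + 1) 1 (n - 1) (by
      rw [hA', h1, hQ]
      push_cast
      linear_combination f * add_self_R2 (PmR n n))
    have hJU : PmR n n * U = 0 ∨ PmR n n * U = PmR n n := by
      rcases hr with h | h
      · left
        rw [h]
        linear_combination r * hJx
      · right
        rw [h]
        linear_combination r * hJx
    have hBC : n ≤ f * wt v + (f + 1) * wt u + 2 * wt j ∨
        n ≤ (f + 1) * wt v + f * wt u + 2 * wt j := by
      rcases hcast with ⟨hf0, hf1⟩ | ⟨hf0, hf1⟩ <;> rcases hJU with hJ | hJ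
      · exact Or.inr (hrel _ _ _ (by rw [hC, h1, hQ, hf1, hJ, add_zero]))
      · exact Or.inl (hrel _ _ _ (by rw [hB, h1, hQ, hf0, hJ, zero_add]))
      · exact Or.inl (hrel _ _ _ (by rw [hB, h1, hQ, hf0, hJ, add_zero]))
      · exact Or.inr (hrel _ _ _ (by rw [hC, h1, hQ, hf1, hJ, zero_add]))
    by_contra! hlt
    have hT : wt j + wt u + wt v ≤ 2 * f := by omega
    have hnT := Nat.mul_le_mul_left n hT
    have hcoef : 4 * f + 2 ≤ n + 1 := by nlinarith
    have hnj := Nat.mul_le_mul_right (wt j) hcoef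
    have hj : wt j ≤ 2 * f := by omega
    have hfn : 2 * f < n := by nlinarith
    have htot : (2 * f + 1) * n ≤ n * (wt u + wt v) + (4 * f + 2) * wt j := by
      rcases hBC with h | h
      · have := Nat.mul_le_mul_left (2 * f) h
        have hu : n * wt u = (2 * f ^ 2 + 2 * f + 1) * wt u := by rw [← hnf]
        have hv : n * wt v = (2 * f ^ 2 + 2 * f + 1) * wt v := by rw [← hnf]
        nlinarith
      · have := Nat.mul_le_mul_left (2 * f) h
        have hu : n * wt u = (2 * f ^ 2 + 2 * f + 1) * wt u := by rw [← hnf]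
        have hv : n * wt v = (2 * f ^ 2 + 2 * f + 1) * wt v := by rw [← hnf]
        nlinarith
    nlinarith

end
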